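/- arXiv:1810.10849 — 2 statements merged into one kernel-verified Lean document; each statement's English description precedes it below -/
import Mathlib

section
/- Given s > d/2, there is a constant C = C(s,d) > 0 with the following property: for every continuous f ∈ L²(ℝ^d) with ∫_{ℝ^d} (1+|ξ|²)^s |f̂(ξ)|² dξ < ∞ and every N > 0, there exists R ∈ L²(ℝ^d) with ‖R‖ ≤ C (1 + N^{-d/2}) (∫_{ξ ∉ Q_{πN}(0)} (1+|ξ|²)^s |f̂(ξ)|² dξ)^{1/2} such that the family (f(n/N)·f_{N,n})_{n∈ℤ^d} is summable in L²(ℝ^d) and f = Σ_{n∈ℤ^d} f(n/N) f_{N,n} + R in L²(ℝ^d). -/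
open MeasureTheory Filter Topology Metric ENNReal NNReal

noncomputable section

/-- `sinc` with value 1 at 0. -/
def sinc' (x : ℝ) : ℝ := if x = 0 then 1 else Real.sin x / x

/-- The function `f_{N,n}(x) = ∏_j sin (π (N x_j - n_j)) / (π (N x_j - n_j))`. -/
def fN (d : ℕ) (N : ℝ) (n : Fin d → ℤ) (x : EuclideanSpace ℝ (Fin d)) : ℝ :=
  ∏ j, sinc' (Real.pi * (N * x j - n j))

/-- The lattice point `n / N` in `ℝ^d`. -/
def latticePt (d : ℕ) (N : ℝ) (n : Fin d → ℤ) : EuclideanSpace ℝ (Fin d) :=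
  WithLp.toLp 2 (fun j => (n j : ℝ) / N)

/-- The heat solution at time `t > 0` with initial datum `u₀ ∈ L²(ℝ^d)`:
`u(t,x) = (4πt)^{-d/2} ∫ e^{-|x-y|²/(4t)} u₀(y) dy`. -/
def heatSol (d : ℕ) (u₀ : EuclideanSpace ℝ (Fin d) → ℝ) (t : ℝ)
    (x : EuclideanSpace ℝ (Fin d)) : ℝ :=
  (4 * Real.pi * t) ^ (-(d : ℝ) / 2) * ∫ y, Real.exp (-‖x - y‖ ^ 2 / (4 * t)) * u₀ y

/-- The family `F` is summable in `L²(ℝ^d)` with sum `g`: the finite partial sums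
converge to `g` in the `L²` norm along the filter of finite subsets of `ℤ^d`. -/
def HasSumL2 (d : ℕ) {V : Type} [NormedAddCommGroup V]
    (F : (Fin d → ℤ) → EuclideanSpace ℝ (Fin d) → V)
    (g : EuclideanSpace ℝ (Fin d) → V) : Prop :=
  Tendsto (fun s : Finset (Fin d → ℤ) =>
    eLpNorm (fun x => g x - ∑ n ∈ s, F n x) 2 volume) atTop (𝓝 0)

/-- The closed cube `Q_r(0)` in `ℝ^d`, centered at the origin, of side length `2r`. -/
def Qcube (d : ℕ) (r : ℝ) : Set (EuclideanSpace ℝ (Fin d)) := {ξ | ∀ j, |ξ j| ≤ r}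

/-- The truncated Fourier integral, with the paper's normalization
`(2π)^{-d/2} ∫_{|x| ≤ R} e^{-i x·ξ} f(x) dx`. -/
def truncFT (d : ℕ) (f : EuclideanSpace ℝ (Fin d) → ℂ) (R : ℝ)
    (ξ : EuclideanSpace ℝ (Fin d)) : ℂ :=
  (((2 * Real.pi) ^ (-(d : ℝ) / 2) : ℝ) : ℂ) *
    ∫ x in closedBall (0 : EuclideanSpace ℝ (Fin d)) R,
      Complex.exp (-(Complex.I * ((inner ℝ x ξ : ℝ) : ℂ))) * f x

/-- `fhat` is the Fourier transform of `f ∈ L²(ℝ^d)` in the `L²` (Plancherel) sense: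
`fhat ∈ L²` and the Fourier integrals of the truncations of `f` converge to `fhat`
in the `L²` norm. -/
def IsL2Fourier (d : ℕ) (f fhat : EuclideanSpace ℝ (Fin d) → ℂ) : Prop :=
  MemLp fhat 2 volume ∧
    Tendsto (fun R : ℝ => eLpNorm (fun ξ => fhat ξ - truncFT d f R ξ) 2 volume)
      atTop (𝓝 0)

/-- The `L²(ℝ^d)` norm of a function, as a real number. -/
def l2norm (d : ℕ) {V : Type} [NormedAddCommGroup V]
    (f : EuclideanSpace ℝ (Fin d) → V) : ℝ :=
  (eLpNorm f 2 volume).toReal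

section PartA
open FourierTransform SchwartzMap
open scoped ContDiff

variable {E : Type*} [NormedAddCommGroup E] [MeasurableSpace E] [BorelSpace E]
  [InnerProductSpace ℝ E] [FiniteDimensional ℝ E]

lemma aux_continuous_fourier {h : E → ℂ} (h1 : Integrable h volume) : Continuous (𝓕 h) :=
  VectorFourier.fourierIntegral_continuous Real.continuous_fourierChar
    (by exact continuous_inner) h1

lemma aux_fourierInv_eq_comp {h : E → ℂ} : (𝓕⁻ h) = fun x => 𝓕 h (-x) := by
  ext x; exact Real.fourierInv_eq_fourier_neg h x

lemma aux_continuous_fourierInv {h : E → ℂ} (h1 : Integrable h volume) : Continuous (𝓕⁻ h) := by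
  rw [aux_fourierInv_eq_comp]
  exact (aux_continuous_fourier h1).comp continuous_neg

lemma aux_swap {g h : E → ℂ} (hg : Integrable g volume) (hh : Integrable h volume) :
    ∫ x, 𝓕 g x • h x = ∫ x, g x • 𝓕 h x := by
  have := VectorFourier.integral_fourierIntegral_smul_eq_flip (L := innerₗ E) (μ := volume)
    (ν := volume) (f := g) (g := h) Real.continuous_fourierChar continuous_inner hg hh
  rw [flip_innerₗ] at this
  exact this

lemma aux_swap_inv {g h : E → ℂ} (hg : Integrable g volume) (hh : Integrable h volume) :
    ∫ x, 𝓕⁻ g x • h x = ∫ x, g x • 𝓕⁻ h x := by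
  rw [aux_fourierInv_eq_comp (h := h), Real.fourierInv_eq_fourier_comp_neg g,
    aux_swap hg.comp_neg hh, ← integral_neg_eq_self]
  simp

lemma aux_fourier_ae {h : E → ℂ} (h1 : Integrable h volume) (h2 : MemLp h 2 volume) :
    (𝓕 (h2.toLp h) : Lp ℂ 2 (volume : Measure E)) =ᵐ[volume] 𝓕 h := by
  apply ae_eq_of_integral_contDiff_smul_eq
  · exact (Lp.memLp _).locallyIntegrable one_le_two
  · exact (aux_continuous_fourier h1).locallyIntegrable
  · intro g g_smooth g_cpt
    have hg₁ : HasCompactSupport (Complex.ofRealCLM ∘ g) := g_cpt.comp_left rfl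
    have hg₂ : ContDiff ℝ ∞ (Complex.ofRealCLM ∘ g) := by fun_prop
    set G := hg₁.toSchwartzMap hg₂
    have e1 := congrArg (fun T => T G) (Lp.fourier_toTemperedDistribution_eq (h2.toLp h))
    simp only [TemperedDistribution.fourier_apply, Lp.toTemperedDistribution_apply] at e1
    have e2 : ∫ x, (𝓕 G) x • (h2.toLp h) x = ∫ x, 𝓕 (G : E → ℂ) x • h x := by
      apply integral_congr_ae
      filter_upwards [h2.coeFn_toLp] with x hx
      rw [hx]; rfl
    rw [e2, aux_swap G.integrable h1] at e1
    have hG : ∀ x, G x = (g x : ℂ) := fun x => rfl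
    simp only [hG, Complex.coe_smul] at e1
    exact e1.symm

lemma aux_fourierInv_ae {h : E → ℂ} (h1 : Integrable h volume) (h2 : MemLp h 2 volume) :
    (𝓕⁻ (h2.toLp h) : Lp ℂ 2 (volume : Measure E)) =ᵐ[volume] 𝓕⁻ h := by
  apply ae_eq_of_integral_contDiff_smul_eq
  · exact (Lp.memLp _).locallyIntegrable one_le_two
  · exact (aux_continuous_fourierInv h1).locallyIntegrable
  · intro g g_smooth g_cpt
    have hg₁ : HasCompactSupport (Complex.ofRealCLM ∘ g) := g_cpt.comp_left rfl
    have hg₂ : ContDiff ℝ ∞ (Complex.ofRealCLM ∘ g) := by fun_prop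
    set G := hg₁.toSchwartzMap hg₂
    have e1 := congrArg (fun T => T G) (Lp.fourierInv_toTemperedDistribution_eq (h2.toLp h))
    simp only [TemperedDistribution.fourierInv_apply, Lp.toTemperedDistribution_apply] at e1
    have e2 : ∫ x, (𝓕⁻ G) x • (h2.toLp h) x = ∫ x, 𝓕⁻ (G : E → ℂ) x • h x := by
      apply integral_congr_ae
      filter_upwards [h2.coeFn_toLp] with x hx
      rw [hx, SchwartzMap.fourierInv_coe]
    rw [e2, aux_swap_inv G.integrable h1] at e1
    have hG : ∀ x, G x = (g x : ℂ) := fun x => rfl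
    simp only [hG, Complex.coe_smul] at e1
    exact e1.symm

lemma aux_plancherel {h : E → ℂ} (h1 : Integrable h volume) (h2 : MemLp h 2 volume) :
    MemLp (𝓕⁻ h) 2 volume ∧ eLpNorm (𝓕⁻ h) 2 volume = eLpNorm h 2 volume := by
  have hae := aux_fourierInv_ae h1 h2
  refine ⟨(memLp_congr_ae hae).1 (Lp.memLp _), ?_⟩
  rw [← eLpNorm_congr_ae hae, ← eLpNorm_congr_ae h2.coeFn_toLp, ← Lp.enorm_def, ← Lp.enorm_def]
  have : ‖(𝓕⁻ (h2.toLp h) : Lp ℂ 2 (volume : Measure E))‖ = ‖h2.toLp h‖ :=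
    (Lp.fourierTransformₗᵢ E ℂ).symm.norm_map _
  rw [← ofReal_norm, ← ofReal_norm, this]

/-- If `h_R → f` and `𝓕 h_R → Φ` in L², with Φ in L¹, then `f = 𝓕⁻ Φ` a.e. -/
lemma aux_inversion {f Φ : E → ℂ} {h : ℝ → E → ℂ} (hf : MemLp f 2 volume)
    (hΦ1 : Integrable Φ volume) (hΦ : MemLp Φ 2 volume)
    (h1 : ∀ R, Integrable (h R) volume) (h2 : ∀ R, MemLp (h R) 2 volume)
    (hl : Tendsto (fun R => eLpNorm (h R - f) 2 volume) atTop (𝓝 0))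
    (hl' : Tendsto (fun R => eLpNorm (𝓕 (h R) - Φ) 2 volume) atTop (𝓝 0)) :
    f =ᵐ[volume] 𝓕⁻ Φ := by
  have c1 : Tendsto (fun R => (h2 R).toLp (h R)) atTop (𝓝 (hf.toLp f)) :=
    (Lp.tendsto_Lp_iff_tendsto_eLpNorm'' _ h2 _ hf).2 hl
  have c2 : Tendsto (fun R => (𝓕 ((h2 R).toLp (h R)) : Lp ℂ 2 (volume : Measure E))) atTop
      (𝓝 (hΦ.toLp Φ)) := by
    rw [Lp.tendsto_Lp_iff_tendsto_eLpNorm']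
    refine hl'.congr fun R => eLpNorm_congr_ae ?_
    filter_upwards [aux_fourier_ae (h1 R) (h2 R), hΦ.coeFn_toLp] with x hx hx'
    simp [hx, hx']
  have c3 : Tendsto (fun R => (𝓕 ((h2 R).toLp (h R)) : Lp ℂ 2 (volume : Measure E))) atTop
      (𝓝 (𝓕 (hf.toLp f))) :=
    ((Lp.fourierTransformₗᵢ E ℂ).continuous.tendsto _).comp c1
  have c4 : (𝓕 (hf.toLp f) : Lp ℂ 2 (volume : Measure E)) = hΦ.toLp Φ := tendsto_nhds_unique c3 c2
  have c5 : hf.toLp f = 𝓕⁻ (hΦ.toLp Φ) := by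
    rw [← c4]; exact (FourierTransform.fourierInv_fourier_eq _).symm
  have := aux_fourierInv_ae hΦ1 hΦ
  rw [← c5] at this
  exact hf.coeFn_toLp.symm.trans this
end PartA

noncomputable section PartB
open UnitAddTorus

local instance auxInstA : MeasureSpace UnitAddCircle := ⟨AddCircle.haarAddCircle⟩

local instance auxInstB : Measure.IsAddHaarMeasure (volume : Measure UnitAddCircle) :=
  inferInstanceAs (Measure.IsAddHaarMeasure AddCircle.haarAddCircle)

local instance auxInstC : IsProbabilityMeasure (volume : Measure UnitAddCircle) :=
  inferInstanceAs (IsProbabilityMeasure AddCircle.haarAddCircle)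

/-- half-open unit cube -/
def auxP (d : ℕ) : Set (Fin d → ℝ) := {x | ∀ i, x i ∈ Set.Ioc (-1/2 : ℝ) (-1/2 + 1)}

/-- character -/
def auxE (d : ℕ) (n : Fin d → ℤ) (x : Fin d → ℝ) : ℂ :=
  Complex.exp (2 * Real.pi * Complex.I * ((∑ j, (n j : ℝ) * x j : ℝ) : ℂ))

lemma aux_mFourier (d : ℕ) (n : Fin d → ℤ) (x : Fin d → ℝ) :
    mFourier n (fun i => (x i : UnitAddCircle)) = auxE d n x := by
  simp only [mFourier, ContinuousMap.coe_mk, fourier_coe_apply, auxE]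
  rw [← Complex.exp_sum]
  congr 1
  push_cast
  rw [Finset.mul_sum]
  refine Finset.sum_congr rfl fun j _ => ?_
  simp; ring

lemma aux_measurableSet_P (d : ℕ) : MeasurableSet (auxP d) :=
  MeasurableSet.univ_pi' (fun _ => measurableSet_Ioc)

lemma aux_hasSum_neg {X : Type*} [AddCommMonoid X] [TopologicalSpace X] {d : ℕ}
    {u : (Fin d → ℤ) → X} {x : X} (h : HasSum u x) : HasSum (fun n => u (-n)) x :=
  (Equiv.neg (Fin d → ℤ)).hasSum_iff.2 h

lemma aux_torus (d : ℕ) (h : (Fin d → ℝ) → ℂ) (hh : MemLp h 2 (volume.restrict (auxP d))) :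
    Tendsto (fun s : Finset (Fin d → ℤ) => eLpNorm (fun x => h x -
      ∑ n ∈ s, (∫ y in auxP d, auxE d n y * h y) * auxE d (-n) x) 2 (volume.restrict (auxP d)))
      atTop (𝓝 0) := by
  set a : Fin d → ℝ := fun _ => -1/2
  set rep : UnitAddTorus (Fin d) → (Fin d → ℝ) := fun t => (measurableEquivPiIoc a t).1 with hrep
  have hmp : MeasurePreserving rep volume (volume.restrict (auxP d)) := by
    have h1 := measurePreserving_equivPiIoc a
    have h2 : MeasurePreserving (Subtype.val : auxP d → (Fin d → ℝ))
      (Measure.comap Subtype.val volume) (volume.restrict (auxP d)) :=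
      ⟨measurable_subtype_coe, map_comap_subtype_coe (aux_measurableSet_P d) _⟩
    exact h2.comp h1
  have hmk : ∀ t, (fun i => (rep t i : UnitAddCircle)) = t := fun t =>
    (measurableEquivPiIoc a).symm_apply_apply t
  have hH : MemLp (h ∘ rep) 2 volume := hh.comp_measurePreserving hmp
  have key := aux_hasSum_neg (hasSum_mFourier_series_L2 (hH.toLp (h ∘ rep)))
  beta_reduce at key
  have hc : ∀ n, mFourierCoeff (hH.toLp (h ∘ rep)) (-n) = ∫ y in auxP d, auxE d n y * h y := by
    intro n
    rw [← hmp.map_eq]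
    rw [integral_map hmp.measurable.aemeasurable]
    · rw [mFourierCoeff, neg_neg]
      apply integral_congr_ae
      filter_upwards [hH.coeFn_toLp] with t ht
      rw [ht, ← aux_mFourier, hmk]; rfl
    · rw [hmp.map_eq]
      refine AEStronglyMeasurable.mul (Continuous.aestronglyMeasurable ?_) hh.1
      unfold auxE; fun_prop
  rw [HasSum, Lp.tendsto_Lp_iff_tendsto_eLpNorm'] at key
  refine key.congr fun s => ?_
  have hm : AEStronglyMeasurable (fun x => h x -
      ∑ n ∈ s, (∫ y in auxP d, auxE d n y * h y) * auxE d (-n) x) (volume.restrict (auxP d)) := by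
    refine hh.1.sub (Continuous.aestronglyMeasurable ?_)
    unfold auxE; fun_prop
  rw [← eLpNorm_comp_measurePreserving hm hmp, ← eLpNorm_neg]
  apply eLpNorm_congr_ae
  have e1 : ∀ᵐ t ∂(volume : Measure (UnitAddTorus (Fin d))), ∀ n ∈ s,
      (mFourierLp 2 (-n) : Lp ℂ 2 (volume : Measure (UnitAddTorus (Fin d)))) t = mFourier (-n) t := by
    rw [Filter.eventually_all_finset]
    intro n _
    exact coeFn_mFourierLp 2 (-n)
  have e2 : ∀ᵐ t ∂(volume : Measure (UnitAddTorus (Fin d))), ∀ n ∈ s,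
      (mFourierCoeff (hH.toLp (h ∘ rep)) (-n) • mFourierLp 2 (-n) :
        Lp ℂ 2 (volume : Measure (UnitAddTorus (Fin d)))) t
        = mFourierCoeff (hH.toLp (h ∘ rep)) (-n) • mFourierLp 2 (-n) t := by
    rw [Filter.eventually_all_finset]
    intro n _
    exact Lp.coeFn_smul _ _
  filter_upwards [e1, e2, hH.coeFn_toLp, Lp.coeFn_finsetSum s (fun n => (mFourierCoeff (hH.toLp (h ∘ rep)) (-n) • mFourierLp 2 (-n) :
        Lp ℂ 2 (volume : Measure (UnitAddTorus (Fin d)))))] with t h1 h2 h3 h4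
  simp only [Pi.neg_apply, Pi.sub_apply, neg_sub, Function.comp]
  rw [h3, h4]
  simp only [Function.comp, Finset.sum_apply]
  congr 1
  refine Finset.sum_congr rfl fun n hn => ?_
  rw [h2 n hn, h1 n hn, hc, ← aux_mFourier, hmk]; rfl
end PartB

noncomputable section PartC

/-- integer vector as a real vector -/
def auxZ {d : ℕ} (k : Fin d → ℤ) : Fin d → ℝ := fun i => (k i : ℝ)

/-- translated cube -/
def auxT (d : ℕ) (k : Fin d → ℤ) : Set (Fin d → ℝ) := {x | x - auxZ k ∈ auxP d}

lemma aux_measT (d : ℕ) (k : Fin d → ℤ) : MeasurableSet (auxT d k) :=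
  (aux_measurableSet_P d).preimage (measurable_id.sub_const _)

lemma aux_disjT (d : ℕ) : Pairwise (Function.onFun Disjoint (auxT d)) := by
  intro k l hkl
  rw [Function.onFun, Set.disjoint_left]
  intro x hx hx'
  apply hkl
  ext i
  have h1 := hx i
  have h2 := hx' i
  simp only [auxZ, Pi.sub_apply, Set.mem_Ioc] at h1 h2
  have a1 : (k i : ℝ) < l i + 1 := by linarith
  have a2 : (l i : ℝ) < k i + 1 := by linarith
  norm_cast at a1 a2
  lia

lemma aux_unionT (d : ℕ) : ⋃ k, auxT d k = Set.univ := by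
  rw [Set.eq_univ_iff_forall]
  intro x
  rw [Set.mem_iUnion]
  refine ⟨fun i => ⌈x i - 1/2⌉, fun i => ?_⟩
  simp only [auxZ, Pi.sub_apply, Set.mem_Ioc]
  have h1 := Int.le_ceil (x i - 1/2)
  have h2 := Int.ceil_lt_add_one (x i - 1/2)
  constructor <;> linarith

lemma aux_preT (d : ℕ) (k : Fin d → ℤ) : (fun x => x + auxZ k) ⁻¹' auxT d k = auxP d := by
  ext x; simp [auxT]

lemma aux_lintegral_T (d : ℕ) (u : (Fin d → ℝ) → ℝ≥0∞) (k : Fin d → ℤ) :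
    ∫⁻ x in auxT d k, u x = ∫⁻ x in auxP d, u (x + auxZ k) := by
  rw [← aux_preT d k]
  exact ((measurePreserving_add_right volume (auxZ k)).setLIntegral_comp_preimage_emb
    (measurableEmbedding_addRight _) u _).symm

lemma aux_lintegral_tsum (d : ℕ) (u : (Fin d → ℝ) → ℝ≥0∞) :
    ∫⁻ x, u x = ∑' k, ∫⁻ x in auxP d, u (x + auxZ k) := by
  rw [← setLIntegral_univ, ← aux_unionT d, lintegral_iUnion (aux_measT d) (aux_disjT d)]
  simp_rw [aux_lintegral_T]

lemma aux_integral_tsum (d : ℕ) (u : (Fin d → ℝ) → ℂ) (hu : Integrable u volume) :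
    ∫ x, u x = ∑' k, ∫ x in auxP d, u (x + auxZ k) := by
  rw [← setIntegral_univ, ← aux_unionT d, integral_iUnion (aux_measT d) (aux_disjT d)
    (hu.integrableOn)]
  congr 1; ext k
  rw [← aux_preT d k]
  exact ((measurePreserving_add_right volume (auxZ k)).setIntegral_preimage_emb
    (measurableEmbedding_addRight _) u _).symm

lemma aux_E_per (d : ℕ) (n k : Fin d → ℤ) (x : Fin d → ℝ) :
    auxE d n (x + auxZ k) = auxE d n x := by
  unfold auxE
  rw [Complex.exp_eq_exp_iff_exists_int]
  refine ⟨∑ j, n j * k j, ?_⟩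
  simp only [auxZ, Pi.add_apply, mul_add, Finset.sum_add_distrib]
  push_cast
  ring

lemma aux_E_norm (d : ℕ) (n : Fin d → ℤ) (x : Fin d → ℝ) : ‖auxE d n x‖ = 1 := by
  unfold auxE
  rw [Complex.norm_exp]
  simp

lemma aux_E_cont (d : ℕ) (n : Fin d → ℤ) : Continuous (auxE d n) := by
  unfold auxE; fun_prop

lemma aux_CS {ι : Type*} (a v b : ι → ℝ≥0∞) (h : ∀ k, a k ^ 2 ≤ v k * b k) :
    (∑' k, a k) ^ 2 ≤ (∑' k, v k) * ∑' k, b k := by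
  let _ : MeasurableSpace ι := ⊤
  have hh := ENNReal.lintegral_mul_le_Lp_mul_Lq (Measure.count : Measure ι)
    Real.HolderConjugate.two_two (f := fun k => v k ^ (1/2 : ℝ)) (g := fun k => b k ^ (1/2 : ℝ))
    (measurable_from_top.aemeasurable) (measurable_from_top.aemeasurable)
  simp only [lintegral_count, Pi.mul_apply, ← ENNReal.rpow_mul] at hh
  norm_num at hh
  have h2 : ∑' k, a k ≤ ∑' k, v k ^ (1/2 : ℝ) * b k ^ (1/2 : ℝ) := by
    refine ENNReal.tsum_le_tsum fun k => ?_
    rw [← ENNReal.mul_rpow_of_nonneg _ _ (by norm_num)]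
    calc a k = (a k ^ 2) ^ (1/2 : ℝ) := by
          rw [← ENNReal.rpow_natCast, ← ENNReal.rpow_mul]; norm_num
      _ ≤ _ := ENNReal.rpow_le_rpow (h k) (by norm_num)
  calc (∑' k, a k) ^ 2 ≤ ((∑' k, v k) ^ (1/2 : ℝ) * (∑' k, b k) ^ (1/2 : ℝ)) ^ 2 := by
        gcongr; refine h2.trans ?_
        norm_num
        exact hh
    _ = _ := by
        rw [mul_pow, ← ENNReal.rpow_natCast, ← ENNReal.rpow_natCast, ← ENNReal.rpow_mul,
          ← ENNReal.rpow_mul]; norm_num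

lemma aux_lintegral_sq {α : Type*} {m : MeasurableSpace α} (μ : Measure α) (f : α → ℂ) :
    eLpNorm f 2 μ ^ 2 = ∫⁻ x, ‖f x‖ₑ ^ 2 ∂μ := by
  rw [eLpNorm_eq_lintegral_rpow_enorm_toReal (by norm_num) (by norm_num)]
  rw [← ENNReal.rpow_natCast, ← ENNReal.rpow_mul]
  norm_num

lemma aux_periodize (d : ℕ) (Φ : (Fin d → ℝ) → ℂ) (hΦ : Integrable Φ volume)
    (w v : (Fin d → ℝ) → ℝ≥0∞) (hwm : Measurable w)
    (hwv : ∀ x ∉ auxP d, 1 ≤ v x * w x) (A : ℝ≥0∞) (hA : A ≠ ∞)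
    (hv : ∀ x ∈ auxP d, ∑' k, v (x + auxZ k) ≤ A)
    (hI : ∫⁻ x in (auxP d)ᶜ, w x * ‖Φ x‖ₑ ^ 2 ≠ ∞) :
    ∃ D : (Fin d → ℝ) → ℂ, MemLp D 2 (volume.restrict (auxP d)) ∧
      ∫⁻ x in auxP d, ‖D x‖ₑ ^ 2 ≤ A * ∫⁻ x in (auxP d)ᶜ, w x * ‖Φ x‖ₑ ^ 2 ∧
      ∀ n, ∫ x in auxP d, auxE d n x * (Φ x + D x) = ∫ x, auxE d n x * Φ x := by
  set Φ0 : (Fin d → ℝ) → ℂ := (auxP d)ᶜ.indicator Φ with hΦ0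
  have hmP := aux_measurableSet_P d
  have hi0 : Integrable Φ0 volume := hΦ.indicator hmP.compl
  set u : (Fin d → ℝ) → ℝ≥0∞ := fun x => w x * ‖Φ0 x‖ₑ ^ 2 with hu
  have hum : AEMeasurable u volume := hwm.aemeasurable.mul (hi0.1.enorm.pow_const 2)
  have hu' : ∫⁻ x, u x = ∫⁻ x in (auxP d)ᶜ, w x * ‖Φ x‖ₑ ^ 2 := by
    rw [← lintegral_indicator hmP.compl]
    congr 1; ext x
    by_cases hx : x ∈ auxP d <;> simp [hu, hΦ0, hx]
  have hqmp : ∀ k : Fin d → ℤ, Measure.QuasiMeasurePreserving (fun x => x + auxZ k)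
      (volume.restrict (auxP d)) volume := fun k =>
    ((measurePreserving_add_right volume (auxZ k)).quasiMeasurePreserving).mono_left
      Measure.restrict_le_self.absolutelyContinuous
  have hm0 : ∀ k : Fin d → ℤ, AEStronglyMeasurable (fun x => Φ0 (x + auxZ k))
      (volume.restrict (auxP d)) := fun k => hi0.1.comp_quasiMeasurePreserving (hqmp k)
  have hum' : ∀ k : Fin d → ℤ, AEMeasurable (fun x => u (x + auxZ k))
      (volume.restrict (auxP d)) := fun k => hum.comp_quasiMeasurePreserving (hqmp k)
  set D : (Fin d → ℝ) → ℂ := fun x => ∑' k, Φ0 (x + auxZ k) with hD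
  have hfin : ∑' k, ∫⁻ x in auxP d, ‖Φ0 (x + auxZ k)‖ₑ ≠ ∞ := by
    rw [← aux_lintegral_tsum d (fun x => ‖Φ0 x‖ₑ)]
    exact hi0.2.ne
  have hsum : ∀ᵐ x ∂(volume.restrict (auxP d)), Summable fun k => Φ0 (x + auxZ k) := by
    rw [← lintegral_tsum (fun k => (hm0 k).enorm)] at hfin
    have := ae_lt_top' (AEMeasurable.tsum fun k => (hm0 k).enorm) hfin
    filter_upwards [this] with x hx
    rw [← summable_norm_iff]
    have h3 := ENNReal.tsum_coe_ne_top_iff_summable.1 hx.ne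
    exact NNReal.summable_coe.2 h3
  have hDm : AEStronglyMeasurable D (volume.restrict (auxP d)) := by
    refine aestronglyMeasurable_of_tendsto_ae (u := (atTop : Filter (Finset (Fin d → ℤ))))
      (f := fun s x => ∑ k ∈ s, Φ0 (x + auxZ k)) (fun s => ?_) ?_
    · exact Finset.aestronglyMeasurable_fun_sum s fun k _ => hm0 k
    · filter_upwards [hsum] with x hx
      exact hx.hasSum
  have hDb : ∫⁻ x in auxP d, ‖D x‖ₑ ^ 2 ≤ A * ∫⁻ x in (auxP d)ᶜ, w x * ‖Φ x‖ₑ ^ 2 := by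
    rw [← hu', aux_lintegral_tsum d u, ← lintegral_tsum hum',
      ← lintegral_const_mul' _ _ hA]
    refine setLIntegral_mono' hmP fun x hx => ?_
    calc ‖D x‖ₑ ^ 2 ≤ (∑' k, ‖Φ0 (x + auxZ k)‖ₑ) ^ 2 := by
          gcongr; exact enorm_tsum_le_tsum_enorm
      _ ≤ (∑' k, v (x + auxZ k)) * ∑' k, u (x + auxZ k) := by
          apply aux_CS
          intro k
          by_cases hk : x + auxZ k ∈ auxP d
          · simp [hΦ0, hk]
          · simp only [hu, ← mul_assoc]
            exact le_mul_of_one_le_left (by simp) (hwv _ hk)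
      _ ≤ _ := by gcongr; exact hv x hx
  have hDL : MemLp D 2 (volume.restrict (auxP d)) := by
    refine ⟨hDm, ?_⟩
    have : eLpNorm D 2 (volume.restrict (auxP d)) ^ 2 < ∞ := by
      rw [aux_lintegral_sq]
      exact hDb.trans_lt (ENNReal.mul_lt_top hA.lt_top hI.lt_top)
    by_contra hcon
    rw [not_lt, top_le_iff] at hcon
    simp [hcon] at this
  have hvol : volume (auxP d) ≠ ∞ := by
    have : auxP d ⊆ Set.Icc (fun _ => (-1/2 : ℝ)) (fun _ => (-1/2 + 1 : ℝ)) := fun x hx =>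
      ⟨fun i => (hx i).1.le, fun i => (hx i).2⟩
    exact ((measure_mono this).trans_lt isCompact_Icc.measure_lt_top).ne
  have : IsFiniteMeasure (volume.restrict (auxP d)) := ⟨by simpa using hvol.lt_top⟩
  have hDi : Integrable D (volume.restrict (auxP d)) := hDL.integrable one_le_two
  have hEi : ∀ (n : Fin d → ℤ) {μ : Measure (Fin d → ℝ)} {g : (Fin d → ℝ) → ℂ}, Integrable g μ →
      Integrable (fun x => auxE d n x * g x) μ := fun n μ g hg =>
    hg.bdd_mul (c := 1) (aux_E_cont d n).aestronglyMeasurable (ae_of_all _ fun x => (aux_E_norm d n x).le)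
  refine ⟨D, hDL, hDb, fun n => ?_⟩
  simp only [mul_add]
  rw [integral_add (hEi n hΦ.integrableOn) (hEi n hDi),
    ← integral_add_compl hmP (hEi n hΦ)]
  congr 1
  have e1 : ∫ x in (auxP d)ᶜ, auxE d n x * Φ x = ∫ x, auxE d n x * Φ0 x := by
    rw [← integral_indicator hmP.compl]
    congr 1; ext x
    by_cases hx : x ∈ auxP d <;> simp [hΦ0, hx]
  rw [e1, aux_integral_tsum d _ (hEi n hi0)]
  have e2 : ∀ x, auxE d n x * D x = ∑' k, auxE d n x * Φ0 (x + auxZ k) := fun x =>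
    tsum_mul_left.symm
  simp only [aux_E_per, e2]
  rw [integral_tsum]
  · intro k
    exact ((aux_E_cont d n).aestronglyMeasurable).mul (hm0 k)
  · have : ∀ x, ‖auxE d n x‖ₑ = 1 := fun x => by rw [← ofReal_norm, aux_E_norm]; simp
    simpa [enorm_mul, this] using hfin
end PartC


noncomputable section PartD

abbrev auxEu (d : ℕ) := EuclideanSpace ℝ (Fin d)

lemma aux_map_smul (d : ℕ) {a : ℝ} (ha : 0 < a) :
    Measure.map (fun x : auxEu d => a • x) volume = ENNReal.ofReal ((a ^ d)⁻¹) • volume := by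
  have := Measure.map_addHaar_smul (volume : Measure (auxEu d)) ha.ne'
  rw [finrank_euclideanSpace_fin, abs_of_pos (by positivity)] at this
  exact this

lemma aux_emb_smul (d : ℕ) {a : ℝ} (ha : 0 < a) :
    MeasurableEmbedding (fun x : auxEu d => a • x) :=
  (Homeomorph.smulOfNeZero a ha.ne').measurableEmbedding

lemma aux_lint_smul (d : ℕ) {a : ℝ} (ha : 0 < a) (u : auxEu d → ℝ≥0∞) :
    ∫⁻ x, u (a • x) = ENNReal.ofReal ((a ^ d)⁻¹) * ∫⁻ x, u x := by
  rw [← (aux_emb_smul d ha).lintegral_map u, aux_map_smul d ha, lintegral_smul_measure, smul_eq_mul]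

/-- weight -/
def auxW (d : ℕ) (r s : ℝ) (x : Fin d → ℝ) : ℝ :=
  (1 + (r * ‖(WithLp.toLp 2 x : auxEu d)‖) ^ 2) ^ s

lemma aux_vol_P (d : ℕ) : volume (auxP d) = 1 := by
  have : auxP d = Set.pi Set.univ (fun _ => Set.Ioc (-1/2 : ℝ) (-1/2 + 1)) := by
    ext x; simp [auxP]
  rw [this, volume_pi_pi]
  simp

/-- J -/
def auxJ (d : ℕ) (s : ℝ) : ℝ≥0∞ := ∫⁻ x : auxEu d, ENNReal.ofReal ((1 + ‖x‖ ^ 2) ^ (-s))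

lemma aux_J_fin (d : ℕ) {s : ℝ} (hs : (d : ℝ) / 2 < s) : auxJ d s ≠ ∞ := by
  have h := integrable_rpow_neg_one_add_norm_sq (E := auxEu d) (μ := volume) (r := 2 * s)
    (by rw [finrank_euclideanSpace_fin]; linarith)
  have h2 : -(2 * s) / 2 = -s := by ring
  rw [h2] at h
  have := h.lintegral_lt_top
  exact this.ne

lemma aux_half_le (d : ℕ) {x : Fin d → ℝ} (hx : x ∉ auxP d) :
    1 / 2 ≤ ‖(WithLp.toLp 2 x : auxEu d)‖ := by
  simp only [auxP, Set.mem_ofPred_eq, not_forall] at hx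
  obtain ⟨i, hi⟩ := hx
  refine le_trans ?_ (PiLp.norm_apply_le (WithLp.toLp 2 x : auxEu d) i)
  rw [Real.norm_eq_abs]
  by_contra! hcon
  apply hi
  rw [abs_lt] at hcon
  constructor <;> linarith [hcon.1, hcon.2]

lemma aux_diff_le (d : ℕ) {x y : Fin d → ℝ} (hx : x ∈ auxP d) (hy : y ∈ auxP d) :
    ‖(WithLp.toLp 2 (y - x) : auxEu d)‖ ≤ Real.sqrt d := by
  rw [EuclideanSpace.norm_eq]
  apply Real.sqrt_le_sqrt
  calc ∑ i, ‖(WithLp.toLp 2 (y - x) : auxEu d) i‖ ^ 2 ≤ ∑ _i : Fin d, (1 : ℝ) := by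
        refine Finset.sum_le_sum fun i _ => ?_
        have h1 := hx i
        have h2 := hy i
        rw [Set.mem_Ioc] at h1 h2
        simp only [Real.norm_eq_abs, sq_abs, Pi.sub_apply]
        rw [sq_le_one_iff_abs_le_one, abs_le]
        constructor <;> linarith [h1.1, h1.2, h2.1, h2.2]
    _ = d := by simp

lemma aux_A (d : ℕ) {s : ℝ} (hs : 0 < s) {r : ℝ} (hr : 0 < r) (x : Fin d → ℝ) (hx : x ∈ auxP d) :
    ∑' k, (auxP d)ᶜ.indicator (fun y => ENNReal.ofReal (auxW d r (-s) y)) (x + auxZ k) ≤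
      ENNReal.ofReal (((r / (1 + 2 * Real.sqrt d)) ^ d)⁻¹) * auxJ d s := by
  set c : ℝ := 1 + 2 * Real.sqrt d with hc
  have hc0 : 0 < c := by positivity
  have hrc : 0 < r / c := by positivity
  have e1 : ENNReal.ofReal (((r / c) ^ d)⁻¹) * auxJ d s =
      ∫⁻ y : Fin d → ℝ, ENNReal.ofReal (auxW d (r / c) (-s) y) := by
    rw [auxJ, ← aux_lint_smul d hrc, ← (PiLp.volume_preserving_toLp (Fin d)).lintegral_comp_emb
      (MeasurableEquiv.toLp 2 (Fin d → ℝ)).measurableEmbedding]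
    congr 1; ext y
    rw [auxW, norm_smul, Real.norm_eq_abs, abs_of_pos hrc]
  rw [e1, aux_lintegral_tsum]
  refine ENNReal.tsum_le_tsum fun k => ?_
  by_cases hk : x + auxZ k ∈ auxP d
  · simp [hk]
  rw [Set.indicator_of_mem hk]
  calc ENNReal.ofReal (auxW d r (-s) (x + auxZ k))
      = ∫⁻ _ in auxP d, ENNReal.ofReal (auxW d r (-s) (x + auxZ k)) := by
        rw [setLIntegral_const, aux_vol_P, mul_one]
    _ ≤ _ := by
        refine setLIntegral_mono' (aux_measurableSet_P d) fun y hy => ?_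
        apply ENNReal.ofReal_le_ofReal
        unfold auxW
        apply Real.rpow_le_rpow_of_nonpos (by positivity) _ (by linarith)
        have h1 := aux_half_le d hk
        have h2 := aux_diff_le d hx hy
        have h3 : ‖(WithLp.toLp 2 (y + auxZ k) : auxEu d)‖ ≤
            c * ‖(WithLp.toLp 2 (x + auxZ k) : auxEu d)‖ := by
          have : (WithLp.toLp 2 (y + auxZ k) : auxEu d) = WithLp.toLp 2 (x + auxZ k) +
              WithLp.toLp 2 (y - x) := by
            rw [← WithLp.toLp_add]; congr 1; abel
          rw [this]
          refine (norm_add_le _ _).trans ?_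
          have : Real.sqrt d * 1 ≤ Real.sqrt d * (2 * ‖(WithLp.toLp 2 (x + auxZ k) : auxEu d)‖) := by
            gcongr; linarith
          rw [hc]; linarith
        have h4 : r / c * ‖(WithLp.toLp 2 (y + auxZ k) : auxEu d)‖ ≤
            r * ‖(WithLp.toLp 2 (x + auxZ k) : auxEu d)‖ := by
          rw [div_mul_eq_mul_div, div_le_iff₀ hc0]
          calc _ ≤ r * (c * ‖(WithLp.toLp 2 (x + auxZ k) : auxEu d)‖) := by gcongr
            _ = _ := by ring
        gcongr
end PartD


noncomputable section PartE
open FourierTransform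

/-- cube in Euclidean space -/
def auxQ (d : ℕ) : Set (auxEu d) := {x | x.ofLp ∈ auxP d}

lemma aux_measQ (d : ℕ) : MeasurableSet (auxQ d) :=
  (aux_measurableSet_P d).preimage (MeasurableEquiv.toLp 2 (Fin d → ℝ)).symm.measurable

lemma aux_sinc_integral (t : ℝ) :
    ∫ v in Set.Ioc (-1/2 : ℝ) (-1/2 + 1), Complex.exp (2 * Real.pi * Complex.I * (t * v)) =
      (sinc' (Real.pi * t) : ℂ) := by
  rw [← intervalIntegral.integral_of_le (by norm_num)]
  by_cases ht : t = 0
  · simp [ht, sinc']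
  · have hpi : (Real.pi : ℂ) ≠ 0 := by exact_mod_cast Real.pi_ne_zero
    have htc : (t : ℂ) ≠ 0 := by exact_mod_cast ht
    have hc : (2 * Real.pi * Complex.I * t : ℂ) ≠ 0 := by simp [ht, Real.pi_ne_zero]
    have := integral_exp_mul_complex (a := -1/2) (b := -1/2 + 1) hc
    simp only [← mul_assoc] at this ⊢
    rw [this, sinc', if_neg (by simp [ht, Real.pi_ne_zero])]
    push_cast
    rw [Complex.sin]
    have e1 : 2 * (Real.pi : ℂ) * Complex.I * t * (-1/2 + 1) = Real.pi * t * Complex.I := by ring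
    have e2 : 2 * (Real.pi : ℂ) * Complex.I * t * (-1/2) = -(Real.pi * t) * Complex.I := by ring
    rw [e1, e2]
    field_simp
    ring_nf
    simp
    ring

lemma aux_fN (d : ℕ) (n : Fin d → ℤ) (x : auxEu d) :
    𝓕⁻ ((auxQ d).indicator (fun v => auxE d (-n) v.ofLp)) x = (fN d 1 n x : ℂ) := by
  rw [Real.fourierInv_eq', ← (PiLp.volume_preserving_toLp (Fin d)).integral_comp
      (MeasurableEquiv.toLp 2 (Fin d → ℝ)).measurableEmbedding]
  have e1 : ∀ v : Fin d → ℝ,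
      Complex.exp (((2 * Real.pi * inner ℝ (WithLp.toLp 2 v : auxEu d) x : ℝ) : ℂ) * Complex.I) •
        (auxQ d).indicator (fun v => auxE d (-n) v.ofLp) (WithLp.toLp 2 v) =
      ∏ j, (Set.Ioc (-1/2 : ℝ) (-1/2 + 1)).indicator (fun y : ℝ =>
        Complex.exp (2 * Real.pi * Complex.I * (((x j - n j : ℝ) : ℂ) * y))) (v j) := by
    intro v
    by_cases hv : v ∈ auxP d
    · have hq : (WithLp.toLp 2 v : auxEu d) ∈ auxQ d := hv
      rw [Set.indicator_of_mem hq]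
      rw [Finset.prod_congr rfl fun j _ => Set.indicator_of_mem (hv j) _]
      rw [← Complex.exp_sum, auxE, smul_eq_mul, ← Complex.exp_add]
      congr 1
      simp only [PiLp.inner_apply, RCLike.inner_apply, conj_trivial, Pi.neg_apply]
      push_cast
      simp only [Finset.mul_sum, Finset.sum_mul]
      rw [← Finset.sum_add_distrib]
      refine Finset.sum_congr rfl fun j _ => ?_
      ring
    · have hq : (WithLp.toLp 2 v : auxEu d) ∉ auxQ d := hv
      rw [Set.indicator_of_notMem hq, smul_zero]
      simp only [auxP, Set.mem_ofPred_eq, not_forall] at hv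
      obtain ⟨i, hi⟩ := hv
      exact (Finset.prod_eq_zero (Finset.mem_univ i) (Set.indicator_of_notMem hi _)).symm
  simp only [e1]
  rw [integral_fintype_prod_volume_eq_prod (f := fun j => (Set.Ioc (-1/2 : ℝ) (-1/2 + 1)).indicator (fun y : ℝ =>
        Complex.exp (2 * Real.pi * Complex.I * (((x j - n j : ℝ) : ℂ) * y))))]
  rw [fN]
  push_cast
  refine Finset.prod_congr rfl fun j _ => ?_
  rw [integral_indicator measurableSet_Ioc]
  have := aux_sinc_integral (x j - n j)
  push_cast at this
  rw [this]
  simp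

lemma aux_inv_integrable {d : ℕ} {f : auxEu d → ℂ} (hf : Integrable f volume) (x : auxEu d) :
    Integrable (fun v => Real.fourierChar (inner ℝ v x) • f v) volume := by
  have := (Real.fourierIntegral_convergent_iff (μ := volume) (f := f) (-x)).2 hf
  simpa using this

lemma aux_inv_sub {d : ℕ} {f g : auxEu d → ℂ} (hf : Integrable f volume)
    (hg : Integrable g volume) (x : auxEu d) :
    𝓕⁻ (fun v => f v - g v) x = 𝓕⁻ f x - 𝓕⁻ g x := by
  simp only [Real.fourierInv_eq, smul_sub]
  exact integral_sub (aux_inv_integrable hf x) (aux_inv_integrable hg x)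

lemma aux_inv_sum {d : ℕ} {ι : Type*} (S : Finset ι) {g : ι → auxEu d → ℂ} (c : ι → ℂ)
    (hg : ∀ i, Integrable (g i) volume) (x : auxEu d) :
    𝓕⁻ (fun v => ∑ i ∈ S, c i * g i v) x = ∑ i ∈ S, c i * 𝓕⁻ (g i) x := by
  simp only [Real.fourierInv_eq, Finset.smul_sum]
  rw [integral_finsetSum]
  · refine Finset.sum_congr rfl fun i _ => ?_
    rw [← integral_const_mul]
    congr 1; ext v
    exact (mul_smul_comm _ _ _).symm
  · intro i _
    exact aux_inv_integrable ((hg i).const_mul (c i)) x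

lemma aux_coef {d : ℕ} (Φ : auxEu d → ℂ) (n : Fin d → ℤ) :
    𝓕⁻ Φ (WithLp.toLp 2 (auxZ n)) = ∫ x, auxE d n x * Φ (WithLp.toLp 2 x) := by
  rw [Real.fourierInv_eq', ← (PiLp.volume_preserving_toLp (Fin d)).integral_comp
      (MeasurableEquiv.toLp 2 (Fin d → ℝ)).measurableEmbedding]
  congr 1; ext v
  rw [smul_eq_mul, auxE]
  congr 2
  simp only [PiLp.inner_apply, RCLike.inner_apply, conj_trivial, auxZ]
  push_cast
  ring

/-- constant `A` -/
def auxA (d : ℕ) (s r : ℝ) : ℝ≥0∞ :=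
  ENNReal.ofReal (((r / (1 + 2 * Real.sqrt d)) ^ d)⁻¹) * auxJ d s

lemma aux_main (d : ℕ) {s : ℝ} (hs : (d : ℝ) / 2 < s) {r : ℝ} (hr : 0 < r) (Φ : auxEu d → ℂ)
    (h1 : Integrable Φ volume) (h2 : MemLp Φ 2 volume)
    (hI : ∫⁻ x in (auxQ d)ᶜ, ENNReal.ofReal ((1 + (r * ‖x‖) ^ 2) ^ s) * ‖Φ x‖ₑ ^ 2 ≠ ∞) :
    ∃ R : auxEu d → ℂ, MemLp R 2 volume ∧
      eLpNorm R 2 volume ^ 2 ≤ (1 + auxA d s r) *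
        ∫⁻ x in (auxQ d)ᶜ, ENNReal.ofReal ((1 + (r * ‖x‖) ^ 2) ^ s) * ‖Φ x‖ₑ ^ 2 ∧
      Tendsto (fun S : Finset (Fin d → ℤ) => eLpNorm (fun x => 𝓕⁻ Φ x - R x -
        ∑ n ∈ S, 𝓕⁻ Φ (WithLp.toLp 2 (auxZ n)) * (fN d 1 n x : ℂ)) 2 volume) atTop (𝓝 0) := by
  have hs0 : 0 < s := lt_of_le_of_lt (by positivity) hs
  set I := ∫⁻ x in (auxQ d)ᶜ, ENNReal.ofReal ((1 + (r * ‖x‖) ^ 2) ^ s) * ‖Φ x‖ₑ ^ 2 with hIdef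
  have mp := PiLp.volume_preserving_toLp (Fin d)
  have mp' := PiLp.volume_preserving_ofLp (Fin d)
  have emb := (MeasurableEquiv.toLp 2 (Fin d → ℝ)).measurableEmbedding
  have hmQ := aux_measQ d
  set Φ' : (Fin d → ℝ) → ℂ := fun x => Φ (WithLp.toLp 2 x) with hΦ'
  have h1' : Integrable Φ' volume := (mp.integrable_comp_emb emb).2 h1
  have h2' : MemLp Φ' 2 volume := h2.comp_measurePreserving mp
  have hIV : ∫⁻ x in (auxP d)ᶜ, ENNReal.ofReal (auxW d r s x) * ‖Φ' x‖ₑ ^ 2 = I :=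
    mp.setLIntegral_comp_preimage_emb emb
      (fun x => ENNReal.ofReal ((1 + (r * ‖x‖) ^ 2) ^ s) * ‖Φ x‖ₑ ^ 2) (auxQ d)ᶜ
  have hA : auxA d s r ≠ ∞ := ENNReal.mul_ne_top ENNReal.ofReal_ne_top (aux_J_fin d hs)
  obtain ⟨D, hD2, hDb, hDc⟩ := aux_periodize d Φ' h1' (fun x => ENNReal.ofReal (auxW d r s x))
    ((auxP d)ᶜ.indicator (fun y => ENNReal.ofReal (auxW d r (-s) y)))
    (by
      unfold auxW
      have : Measurable (fun x : Fin d → ℝ => (WithLp.toLp 2 x : auxEu d)) := mp.measurable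
      fun_prop)
    (fun x hx => by
      rw [Set.indicator_of_mem hx]
      unfold auxW
      rw [← ENNReal.ofReal_mul (by positivity), ← Real.rpow_add (by positivity)]
      simp)
    (auxA d s r) hA (fun x hx => aux_A d hs0 hr x hx) (by rw [hIV]; exact hI)
  rw [hIV] at hDb
  have mpQ : MeasurePreserving (fun x : auxEu d => x.ofLp) (volume.restrict (auxQ d))
      (volume.restrict (auxP d)) := mp'.restrict_preimage (aux_measurableSet_P d)
  have hDQ : MemLp (fun x : auxEu d => D x.ofLp) 2 (volume.restrict (auxQ d)) :=
    hD2.comp_measurePreserving mpQ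
  have hfinQ : IsFiniteMeasure (volume.restrict (auxQ d)) := by
    refine ⟨?_⟩
    rw [Measure.restrict_apply_univ]
    have : volume (auxQ d) = volume (auxP d) :=
      mp'.measure_preimage (aux_measurableSet_P d).nullMeasurableSet
    rw [this, aux_vol_P]; exact ENNReal.one_lt_top
  set H : auxEu d → ℂ := (auxQ d).indicator (fun x => Φ x + D x.ofLp) with hH
  have hsumQ : MemLp (fun x => Φ x + D x.ofLp) 2 (volume.restrict (auxQ d)) :=
    (h2.restrict _).add hDQ
  have hH2 : MemLp H 2 volume := (memLp_indicator_iff_restrict hmQ).2 hsumQ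
  have hH1 : Integrable H volume :=
    (integrable_indicator_iff hmQ).2 (hsumQ.integrable one_le_two)
  set Ψ : auxEu d → ℂ := fun x => Φ x - H x with hΨ
  have hΨ1 : Integrable Ψ volume := h1.sub hH1
  have hΨ2 : MemLp Ψ 2 volume := h2.sub hH2
  obtain ⟨hR2, hRn⟩ := aux_plancherel hΨ1 hΨ2
  refine ⟨𝓕⁻ Ψ, hR2, ?_, ?_⟩
  · rw [hRn, aux_lintegral_sq, ← lintegral_add_compl _ hmQ, add_comm, add_mul, one_mul]
    refine add_le_add ?_ ?_
    · refine setLIntegral_mono' hmQ.compl fun x hx => ?_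
      have : Ψ x = Φ x := by simp [hΨ, hH, Set.indicator_of_notMem hx]
      rw [this]
      refine le_mul_of_one_le_left (by simp) ?_
      rw [ENNReal.one_le_ofReal]
      exact Real.one_le_rpow (by nlinarith [sq_nonneg (r * ‖x‖)]) hs0.le
    · refine le_trans (le_of_eq ?_) hDb
      have e1 := mp'.setLIntegral_comp_preimage_emb
        (MeasurableEquiv.toLp 2 (Fin d → ℝ)).symm.measurableEmbedding
        (fun x => ‖D x‖ₑ ^ 2) (auxP d)
      rw [← e1]
      refine setLIntegral_congr_fun hmQ fun x hx => ?_
      have : Ψ x = - D x.ofLp := by simp [hΨ, hH, Set.indicator_of_mem hx]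
      rw [this, enorm_neg]
  · have key := aux_torus d (fun x => Φ' x + D x) ((h2'.restrict _).add hD2)
    refine key.congr fun S => ?_
    simp only [hDc]
    have hEi : ∀ n, MemLp ((auxQ d).indicator (fun v => auxE d n v.ofLp)) 2 volume ∧
        Integrable ((auxQ d).indicator (fun v => auxE d n v.ofLp)) volume := by
      intro n
      have hc : Continuous (fun v : auxEu d => auxE d n v.ofLp) :=
        (aux_E_cont d n).comp (PiLp.continuous_ofLp 2 _)
      have : MemLp (fun v : auxEu d => auxE d n v.ofLp) 2 (volume.restrict (auxQ d)) :=
        MemLp.of_bound hc.aestronglyMeasurable 1 (ae_of_all _ fun v => (aux_E_norm d n _).le)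
      exact ⟨(memLp_indicator_iff_restrict hmQ).2 this,
        (integrable_indicator_iff hmQ).2 (this.integrable one_le_two)⟩
    set c : (Fin d → ℤ) → ℂ := fun n => 𝓕⁻ Φ (WithLp.toLp 2 (auxZ n)) with hcdef
    set T : auxEu d → ℂ := fun v => ∑ n ∈ S, c n *
      (auxQ d).indicator (fun v => auxE d (-n) v.ofLp) v with hT
    have hT1 : Integrable T volume :=
      integrable_finsetSum _ fun n _ => (hEi (-n)).2.const_mul _
    have hT2 : MemLp T 2 volume := memLp_finsetSum _ fun n _ => (hEi (-n)).1.const_mul _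
    have e1 : (fun x => 𝓕⁻ Φ x - 𝓕⁻ Ψ x -
        ∑ n ∈ S, 𝓕⁻ Φ (WithLp.toLp 2 (auxZ n)) * (fN d 1 n x : ℂ)) =
        𝓕⁻ (fun v => H v - T v) := by
      ext x
      rw [aux_inv_sub hH1 hT1, hΨ, aux_inv_sub h1 hH1, hT, aux_inv_sum S c (fun n => (hEi (-n)).2)]
      simp only [aux_fN, hcdef]
      ring
    rw [e1, (aux_plancherel (h := fun v => H v - T v) (hH1.sub hT1) (hH2.sub hT2)).2]
    have e2 : (fun v => H v - T v) = (auxQ d).indicator (fun v => (Φ v + D v.ofLp) -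
        ∑ n ∈ S, (∫ x, auxE d n x * Φ' x) * auxE d (-n) v.ofLp) := by
      ext v
      by_cases hv : v ∈ auxQ d
      · simp [hH, hT, hv, hcdef, aux_coef, hΦ']
      · simp [hH, hT, hv]
    rw [e2, eLpNorm_indicator_eq_eLpNorm_restrict hmQ]
    have hm : AEStronglyMeasurable (fun x => Φ' x + D x -
        ∑ n ∈ S, (∫ x, auxE d n x * Φ' x) * auxE d (-n) x) (volume.restrict (auxP d)) := by
      refine ((h2'.restrict _).add hD2).1.sub (Continuous.aestronglyMeasurable ?_)
      have := aux_E_cont d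
      fun_prop
    rw [← eLpNorm_comp_measurePreserving hm mpQ]
    rfl


lemma aux_scale_norm (d : ℕ) {a : ℝ} (ha : 0 < a) (u : auxEu d → ℂ) :
    eLpNorm (fun x => u (a • x)) 2 volume ^ 2 =
      ENNReal.ofReal ((a ^ d)⁻¹) * eLpNorm u 2 volume ^ 2 := by
  rw [aux_lintegral_sq, aux_lintegral_sq, ← aux_lint_smul d ha]

lemma aux_scale_memLp (d : ℕ) {a : ℝ} (ha : 0 < a) {u : auxEu d → ℂ} (hu : MemLp u 2 volume) :
    MemLp (fun x => u (a • x)) 2 volume := by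
  refine ⟨?_, ?_⟩
  · have := (aux_emb_smul d ha).aestronglyMeasurable_map_iff (μ := volume) (g := u)
    refine this.1 ?_
    rw [aux_map_smul d ha]
    exact hu.1.smul_measure _
  · have := aux_scale_norm d ha u
    have h2 : eLpNorm (fun x => u (a • x)) 2 volume ^ 2 < ∞ := by
      rw [this]
      exact ENNReal.mul_lt_top ENNReal.ofReal_lt_top (ENNReal.pow_lt_top hu.2)
    by_contra h
    rw [not_lt, top_le_iff] at h
    rw [h] at h2
    simp at h2

lemma aux_tendsto_sq {ι : Type*} {l : Filter ι} {u : ι → ℝ≥0∞} :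
    Tendsto (fun i => u i ^ 2) l (𝓝 0) ↔ Tendsto u l (𝓝 0) := by
  constructor
  · intro h
    have := h.ennrpow_const (1/2 : ℝ)
    rw [ENNReal.zero_rpow_of_pos (by norm_num)] at this
    refine this.congr fun i => ?_
    rw [← ENNReal.rpow_natCast, ← ENNReal.rpow_mul]
    norm_num
  · intro h
    have := h.ennrpow_const (2 : ℝ)
    simpa using this

lemma aux_scale_tendsto (d : ℕ) {a : ℝ} (ha : 0 < a) {ι : Type*} {l : Filter ι}
    {u : ι → auxEu d → ℂ} (h : Tendsto (fun i => eLpNorm (u i) 2 volume) l (𝓝 0)) :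
    Tendsto (fun i => eLpNorm (fun x => u i (a • x)) 2 volume) l (𝓝 0) := by
  rw [← aux_tendsto_sq] at h ⊢
  simp only [aux_scale_norm d ha]
  have := ENNReal.Tendsto.const_mul (a := ENNReal.ofReal ((a ^ d)⁻¹)) h (Or.inr ENNReal.ofReal_ne_top)
  simpa using this

lemma aux_fhat_L1 (d : ℕ) {s : ℝ} (hs : (d : ℝ) / 2 < s) {F : auxEu d → ℂ}
    (hF : MemLp F 2 volume)
    (hI : Integrable (fun ξ => (1 + ‖ξ‖ ^ 2) ^ s * ‖F ξ‖ ^ 2) volume) :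
    Integrable F volume := by
  have hJ : Integrable (fun ξ : auxEu d => (1 + ‖ξ‖ ^ 2) ^ (-s)) volume := by
    refine ⟨?_, ?_⟩
    · refine Measurable.aestronglyMeasurable ?_
      fun_prop
    · rw [hasFiniteIntegral_iff_ofReal (ae_of_all _ fun x => by positivity)]
      exact (aux_J_fin d hs).lt_top
  refine (hJ.add hI).mono' hF.1 (ae_of_all _ fun ξ => ?_)
  have hw : 0 < (1 + ‖ξ‖ ^ 2) ^ s := by positivity
  simp only [Pi.add_apply]
  rw [Real.rpow_neg (by positivity)]
  set w := (1 + ‖ξ‖ ^ 2) ^ s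
  have h1 : w⁻¹ * w = 1 := inv_mul_cancel₀ hw.ne'
  have h2 : w⁻¹ + w * ‖F ξ‖ ^ 2 - ‖F ξ‖ = w⁻¹ * ((1 - w * ‖F ξ‖ / 2) ^ 2 + 3/4 * (w * ‖F ξ‖) ^ 2) := by
    field_simp
    ring
  have h3 : 0 ≤ w⁻¹ * ((1 - w * ‖F ξ‖ / 2) ^ 2 + 3/4 * (w * ‖F ξ‖) ^ 2) := by positivity
  linarith

lemma aux_trunc_tendsto (d : ℕ) {f : auxEu d → ℂ} (hf : MemLp f 2 volume) :
    Tendsto (fun R : ℝ => eLpNorm ((closedBall (0 : auxEu d) R).indicator f - f) 2 volume)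
      atTop (𝓝 0) := by
  rw [← aux_tendsto_sq]
  simp only [aux_lintegral_sq]
  have hfin : ∫⁻ x, ‖f x‖ₑ ^ 2 ≠ ∞ := by
    rw [← aux_lintegral_sq]; exact (ENNReal.pow_lt_top hf.2).ne
  have : (0 : ℝ≥0∞) = ∫⁻ x : auxEu d, 0 := by simp
  rw [this]
  refine tendsto_lintegral_filter_of_dominated_convergence' (fun x => ‖f x‖ₑ ^ 2) ?_ ?_ hfin ?_
  · refine Eventually.of_forall fun R => ?_
    exact (((hf.1.indicator measurableSet_closedBall).sub hf.1).enorm).pow_const 2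
  · refine Eventually.of_forall fun R => ae_of_all _ fun x => ?_
    by_cases hx : x ∈ closedBall (0 : auxEu d) R <;> simp [hx]
  · refine ae_of_all _ fun x => ?_
    refine tendsto_const_nhds.congr' ?_
    filter_upwards [eventually_ge_atTop ‖x‖] with R hR
    have hx : x ∈ closedBall (0 : auxEu d) R := by simpa using hR
    simp [hx]

lemma aux_fourier_trunc (d : ℕ) (f : auxEu d → ℂ) (R : ℝ) (ξ : auxEu d) :
    𝓕 ((closedBall (0 : auxEu d) R).indicator f) ξ =
      (((2 * Real.pi) ^ ((d : ℝ) / 2) : ℝ) : ℂ) * truncFT d f R ((2 * Real.pi) • ξ) := by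
  rw [truncFT, ← mul_assoc, ← Complex.ofReal_mul, ← Real.rpow_add (by positivity)]
  have : (d : ℝ) / 2 + -(d : ℝ) / 2 = 0 := by ring
  rw [this, Real.rpow_zero, Complex.ofReal_one, one_mul, Real.fourier_eq',
    ← integral_indicator measurableSet_closedBall]
  congr 1; ext v
  by_cases hv : v ∈ closedBall (0 : auxEu d) R
  · simp only [Set.indicator_of_mem hv, smul_eq_mul, inner_smul_right]
    congr 2
    push_cast
    ring
  · simp only [Set.indicator_of_notMem hv, smul_zero]

lemma aux_inv_G (d : ℕ) {f F : auxEu d → ℂ} (hc : Continuous f) (hf : MemLp f 2 volume)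
    (hF : IsL2Fourier d f F) (h1 : Integrable F volume) :
    f = 𝓕⁻ (fun ξ => (((2 * Real.pi) ^ ((d : ℝ) / 2) : ℝ) : ℂ) * F ((2 * Real.pi) • ξ)) := by
  have hp : 0 < 2 * Real.pi := by positivity
  set κ : ℂ := (((2 * Real.pi) ^ ((d : ℝ) / 2) : ℝ) : ℂ) with hκ
  set G : auxEu d → ℂ := fun ξ => κ * F ((2 * Real.pi) • ξ) with hG
  have hG1 : Integrable G volume := (h1.comp_smul hp.ne').const_mul _
  have hG2 : MemLp G 2 volume := (aux_scale_memLp d hp hF.1).const_mul _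
  have hh2 : ∀ R, MemLp ((closedBall (0 : auxEu d) R).indicator f) 2 volume :=
    fun R => hf.indicator measurableSet_closedBall
  have hh1 : ∀ R, Integrable ((closedBall (0 : auxEu d) R).indicator f) volume := fun R =>
    (integrable_indicator_iff measurableSet_closedBall).2
      (hc.continuousOn.integrableOn_compact (isCompact_closedBall _ _))
  have hae := aux_inversion (h := fun R => (closedBall (0 : auxEu d) R).indicator f) hf hG1 hG2
    hh1 hh2 (aux_trunc_tendsto d hf) ?_
  · exact (hc.ae_eq_iff_eq volume (aux_continuous_fourierInv hG1)).1 hae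
  · have h3 := aux_scale_tendsto d hp hF.2
    have h4 := ENNReal.Tendsto.const_mul (a := ‖κ‖ₑ) h3 (Or.inr (by simp))
    rw [mul_zero] at h4
    refine h4.congr fun R => ?_
    rw [← eLpNorm_const_smul, ← eLpNorm_neg]
    congr 1
    ext ξ
    simp only [Pi.neg_apply, Pi.smul_apply, Pi.sub_apply, aux_fourier_trunc, hG, smul_eq_mul]
    ring

lemma aux_scale_inv (d : ℕ) {N : ℝ} (hN : 0 < N) (G : auxEu d → ℂ) (x : auxEu d) :
    𝓕⁻ (fun ξ => ((N ^ d : ℝ) : ℂ) * G (N • ξ)) x = 𝓕⁻ G (N⁻¹ • x) := by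
  rw [Real.fourierInv_eq', Real.fourierInv_eq']
  have := Measure.integral_comp_smul volume (fun v : auxEu d =>
    Complex.exp (((2 * Real.pi * inner ℝ v (N⁻¹ • x) : ℝ) : ℂ) * Complex.I) • G v) N
  rw [finrank_euclideanSpace, Fintype.card_fin, abs_of_pos (by positivity)] at this
  have h2 : (N ^ d : ℝ) ≠ 0 := by positivity
  rw [← inv_smul_eq_iff₀ (inv_ne_zero h2), inv_inv] at this
  rw [← this, ← integral_smul]
  congr 1; ext v
  rw [inner_smul_left, inner_smul_right]
  simp only [smul_eq_mul, Complex.real_smul, conj_trivial]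
  have e : N * (N⁻¹ * inner ℝ v x) = inner ℝ v x := by field_simp
  rw [e]
  ring

lemma aux_cube_ae (d : ℕ) : auxQ d =ᵐ[volume] Qcube d (1/2) := by
  have h : (auxP d) =ᵐ[volume] Set.pi Set.univ (fun _ : Fin d => Set.Icc (-1/2 : ℝ) (-1/2 + 1)) := by
    have h0 : auxP d = Set.pi Set.univ (fun _ : Fin d => Set.Ioc (-1/2 : ℝ) (-1/2 + 1)) := by
      ext x; simp [auxP]
    rw [h0]
    have := Measure.univ_pi_Ioc_ae_eq_Icc (μ := fun _ : Fin d => (volume : Measure ℝ))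
      (f := fun _ => (-1/2 : ℝ)) (g := fun _ => (-1/2 + 1 : ℝ))
    rw [← Set.pi_univ_Icc] at this
    exact this
  have h2 := (PiLp.volume_preserving_ofLp (Fin d)).quasiMeasurePreserving.preimage_ae_eq h
  refine (EventuallyEq.of_eq rfl).trans (h2.trans (EventuallyEq.of_eq ?_))
  ext x
  simp only [Set.mem_preimage, Set.mem_pi, Set.mem_univ, true_imp_iff, Set.mem_Icc, Qcube,
    Set.mem_setOf_eq, abs_le]
  refine forall_congr' fun j => ?_
  norm_num

lemma aux_final (d : ℕ) {s : ℝ} (hs : (d : ℝ) / 2 < s) {f F : auxEu d → ℂ} (hc : Continuous f)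
    (hf : MemLp f 2 volume) (hF : IsL2Fourier d f F)
    (hI : Integrable (fun ξ => (1 + ‖ξ‖ ^ 2) ^ s * ‖F ξ‖ ^ 2) volume) {N : ℝ} (hN : 0 < N) :
    ∃ R : auxEu d → ℂ, MemLp R 2 volume ∧
      eLpNorm R 2 volume ^ 2 ≤ (1 + auxA d s (2 * Real.pi * N)) *
        ENNReal.ofReal (∫ ξ in (Qcube d (Real.pi * N))ᶜ, (1 + ‖ξ‖ ^ 2) ^ s * ‖F ξ‖ ^ 2) ∧
      HasSumL2 d (fun n x => f (latticePt d N n) * (fN d N n x : ℂ)) (fun x => f x - R x) := by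
  have h1 := aux_fhat_L1 d hs hF.1 hI
  have hG := aux_inv_G d hc hf hF h1
  have hp : 0 < 2 * Real.pi := by positivity
  have hr : 0 < 2 * Real.pi * N := by positivity
  set κ : ℝ := (2 * Real.pi) ^ ((d : ℝ) / 2) with hκ
  have hκ2 : κ ^ 2 = (2 * Real.pi) ^ d := by
    rw [hκ, ← Real.rpow_natCast, ← Real.rpow_mul hp.le, ← Real.rpow_natCast]
    congr 1
    push_cast
    ring
  set Φ : auxEu d → ℂ := fun ξ => ((N ^ d : ℝ) : ℂ) * ((κ : ℂ) * F ((2 * Real.pi) • (N • ξ)))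
    with hΦ
  have hΦf : ∀ x, 𝓕⁻ Φ x = f (N⁻¹ • x) := fun x => by
    rw [hG]
    exact aux_scale_inv d hN (fun ξ => (κ : ℂ) * F ((2 * Real.pi) • ξ)) x
  have hΦe : Φ = fun ξ => (((N ^ d : ℝ) : ℂ) * (κ : ℂ)) * F ((2 * Real.pi * N) • ξ) := by
    ext ξ
    simp only [hΦ, smul_smul, mul_assoc]
  have hΦ1 : Integrable Φ volume := by
    rw [hΦe]; exact (h1.comp_smul hr.ne').const_mul _
  have hΦ2 : MemLp Φ 2 volume := by
    rw [hΦe]; exact (aux_scale_memLp d hr hF.1).const_mul _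
  have hmQ : MeasurableSet (Qcube d (Real.pi * N)) := by
    have : IsClosed (Qcube d (Real.pi * N)) := by
      have : Qcube d (Real.pi * N) = ⋂ j, {ξ : auxEu d | |ξ j| ≤ Real.pi * N} := by
        ext ξ; simp [Qcube]
      rw [this]
      refine isClosed_iInter fun j => isClosed_le ?_ continuous_const
      fun_prop
    exact this.measurableSet
  have hmH : MeasurableSet (Qcube d (1/2)) := by
    have : IsClosed (Qcube d (1/2)) := by
      have : Qcube d (1/2) = ⋂ j, {ξ : auxEu d | |ξ j| ≤ 1/2} := by
        ext ξ; simp [Qcube]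
      rw [this]
      refine isClosed_iInter fun j => isClosed_le ?_ continuous_const
      fun_prop
    exact this.measurableSet
  set I : ℝ := ∫ ξ in (Qcube d (Real.pi * N))ᶜ, (1 + ‖ξ‖ ^ 2) ^ s * ‖F ξ‖ ^ 2 with hIdef
  have hIl : ENNReal.ofReal I = ∫⁻ ξ, (Qcube d (Real.pi * N))ᶜ.indicator
      (fun ξ => ENNReal.ofReal ((1 + ‖ξ‖ ^ 2) ^ s) * ‖F ξ‖ₑ ^ 2) ξ := by
    rw [lintegral_indicator hmQ.compl, hIdef, ofReal_integral_eq_lintegral_ofReal hI.integrableOn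
      (ae_of_all _ fun x => by positivity)]
    refine lintegral_congr fun x => ?_
    rw [ENNReal.ofReal_mul (by positivity), ENNReal.ofReal_pow (by positivity), ofReal_norm]
  have hInt : ∫⁻ x in (auxQ d)ᶜ, ENNReal.ofReal ((1 + (2 * Real.pi * N * ‖x‖) ^ 2) ^ s) * ‖Φ x‖ₑ ^ 2
      = ENNReal.ofReal (N ^ d) * ENNReal.ofReal I := by
    rw [setLIntegral_congr (aux_cube_ae d).compl, ← lintegral_indicator hmH.compl]
    have hcst : ENNReal.ofReal (N ^ d) = ENNReal.ofReal ((N ^ d * κ) ^ 2) *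
        ENNReal.ofReal (((2 * Real.pi * N) ^ d)⁻¹) := by
      rw [← ENNReal.ofReal_mul (by positivity)]
      congr 1
      rw [mul_pow, hκ2, mul_pow (2 * Real.pi) N d]
      have : (2 * Real.pi) ^ d ≠ 0 := by positivity
      have : N ^ d ≠ 0 := by positivity
      field_simp
    rw [hcst, mul_assoc (ENNReal.ofReal _), hIl, ← aux_lint_smul d hr, ← lintegral_const_mul' _ _ ENNReal.ofReal_ne_top]
    refine lintegral_congr fun x => ?_
    have hiff : (2 * Real.pi * N) • x ∈ (Qcube d (Real.pi * N))ᶜ ↔ x ∈ (Qcube d (1/2))ᶜ := by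
      rw [Set.mem_compl_iff, Set.mem_compl_iff, not_iff_not]
      refine forall_congr' fun j => ?_
      rw [PiLp.smul_apply, smul_eq_mul, abs_mul, abs_of_pos hr]
      have : Real.pi * N = (2 * Real.pi * N) * (1/2) := by ring
      rw [this, mul_le_mul_iff_right₀ hr]
    by_cases hx : x ∈ (Qcube d (1/2))ᶜ
    · rw [Set.indicator_of_mem hx, Set.indicator_of_mem (hiff.2 hx), norm_smul, Real.norm_eq_abs,
        abs_of_pos hr, hΦe]
      have e : ‖((N ^ d : ℝ) : ℂ) * (κ : ℂ)‖ₑ = ENNReal.ofReal (N ^ d * κ) := by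
        rw [← Complex.ofReal_mul, ← ofReal_norm, Complex.norm_real, Real.norm_eq_abs,
          abs_of_nonneg (by positivity)]
      simp only [enorm_mul] at e ⊢
      rw [e, mul_pow, ENNReal.ofReal_pow (by positivity)]
      ring
    · rw [Set.indicator_of_notMem hx, Set.indicator_of_notMem (fun h => hx (hiff.1 h)), mul_zero]
  obtain ⟨R, hR2, hRn, hRt⟩ := aux_main d hs hr Φ hΦ1 hΦ2
    (by rw [hInt]; exact ENNReal.mul_ne_top ENNReal.ofReal_ne_top ENNReal.ofReal_ne_top)
  refine ⟨fun x => R (N • x), aux_scale_memLp d hN hR2, ?_, ?_⟩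
  · rw [aux_scale_norm d hN]
    rw [hInt] at hRn
    calc _ ≤ ENNReal.ofReal ((N ^ d)⁻¹) * ((1 + auxA d s (2 * Real.pi * N)) *
          (ENNReal.ofReal (N ^ d) * ENNReal.ofReal I)) := by gcongr
      _ = (ENNReal.ofReal ((N ^ d)⁻¹) * ENNReal.ofReal (N ^ d)) *
          ((1 + auxA d s (2 * Real.pi * N)) * ENNReal.ofReal I) := by ring
      _ = _ := by
          rw [← ENNReal.ofReal_mul (by positivity), inv_mul_cancel₀ (by positivity),
            ENNReal.ofReal_one, one_mul]
  · refine (aux_scale_tendsto d hN hRt).congr fun S => ?_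
    congr 1
    ext x
    have e1 : N⁻¹ • (N • x) = x := by rw [smul_smul, inv_mul_cancel₀ hN.ne', one_smul]
    simp only [hΦf, e1]
    congr 1
    refine Finset.sum_congr rfl fun n _ => ?_
    have e2 : N⁻¹ • (WithLp.toLp 2 (auxZ n) : auxEu d) = latticePt d N n := by
      ext j
      simp [latticePt, auxZ, div_eq_inv_mul]
    have e3 : fN d 1 n (N • x) = fN d N n x := by
      simp [fN]
    rw [e2, e3]

end PartE

/-- Given `s > d/2`, there is `C = C(s,d) > 0` such that for every continuous `f ∈ L²(ℝ^d)`
with `∫ (1+|ξ|²)^s |f̂(ξ)|² dξ < ∞` and every `N > 0`, there is `R ∈ L²(ℝ^d)` with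
`‖R‖ ≤ C (1 + N^{-d/2}) (∫_{ξ ∉ Q_{πN}(0)} (1+|ξ|²)^s |f̂(ξ)|² dξ)^{1/2}` and
`f = Σ_{n ∈ ℤ^d} f(n/N) f_{N,n} + R` in `L²(ℝ^d)`. -/
theorem statement5 (d : ℕ) (hd : 0 < d) (s : ℝ) (hs : (d : ℝ) / 2 < s) :
    ∃ C : ℝ, 0 < C ∧
      ∀ f fhat : EuclideanSpace ℝ (Fin d) → ℂ,
        Continuous f → MemLp f 2 volume → IsL2Fourier d f fhat →
        Integrable (fun ξ => (1 + ‖ξ‖ ^ 2) ^ s * ‖fhat ξ‖ ^ 2) volume →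
        ∀ N : ℝ, 0 < N →
        ∃ R : EuclideanSpace ℝ (Fin d) → ℂ, MemLp R 2 volume ∧
          l2norm d R ≤ C * (1 + N ^ (-(d : ℝ) / 2)) *
            Real.sqrt (∫ ξ in (Qcube d (Real.pi * N))ᶜ, (1 + ‖ξ‖ ^ 2) ^ s * ‖fhat ξ‖ ^ 2) ∧
          HasSumL2 d (fun n x => f (latticePt d N n) * (fN d N n x : ℂ))
            (fun x => f x - R x) := by
  have hc0 : 0 < 1 + 2 * Real.sqrt d := by positivity
  set c : ℝ := 1 + 2 * Real.sqrt d with hc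
  set B : ℝ := (c / (2 * Real.pi)) ^ d * (auxJ d s).toReal with hB
  have hB0 : 0 ≤ B := by positivity
  refine ⟨1 + Real.sqrt B, by positivity, ?_⟩
  intro f fhat hfc hf hF hI N hN
  obtain ⟨R, hR2, hRn, hRt⟩ := aux_final d hs hfc hf hF hI hN
  refine ⟨R, hR2, ?_, hRt⟩
  set I : ℝ := ∫ ξ in (Qcube d (Real.pi * N))ᶜ, (1 + ‖ξ‖ ^ 2) ^ s * ‖fhat ξ‖ ^ 2 with hIdef
  have hI0 : 0 ≤ I := integral_nonneg fun ξ => by positivity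
  set t : ℝ := N ^ (-(d : ℝ) / 2) with ht
  have ht0 : 0 < t := by positivity
  have ht2 : t ^ 2 = (N ^ d)⁻¹ := by
    rw [ht, ← Real.rpow_natCast, ← Real.rpow_mul hN.le, ← Real.rpow_natCast N d,
      ← Real.rpow_neg hN.le]
    congr 1
    push_cast
    ring
  have hA : auxA d s (2 * Real.pi * N) = ENNReal.ofReal (B * t ^ 2) := by
    rw [auxA, ← ENNReal.ofReal_toReal (aux_J_fin d hs), ← ENNReal.ofReal_mul (by positivity),
      ht2, hB]
    congr 1
    rw [← hc, div_pow, div_pow, mul_pow (2 * Real.pi) N d]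
    have : (2 * Real.pi) ^ d ≠ 0 := by positivity
    have : N ^ d ≠ 0 := by positivity
    have : c ^ d ≠ 0 := by positivity
    field_simp
  rw [hA, ← ENNReal.ofReal_one, ← ENNReal.ofReal_add (by positivity) (by positivity),
    ← ENNReal.ofReal_mul (by positivity)] at hRn
  have h3 : l2norm d R ^ 2 ≤ (1 + B * t ^ 2) * I := by
    have := ENNReal.toReal_mono ENNReal.ofReal_ne_top hRn
    rw [ENNReal.toReal_pow, ENNReal.toReal_ofReal (by positivity)] at this
    exact this
  refine (pow_le_pow_iff_left₀ ENNReal.toReal_nonneg (by positivity) two_ne_zero).1 ?_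
  refine h3.trans ?_
  rw [mul_pow, Real.sq_sqrt hI0]
  refine mul_le_mul_of_nonneg_right ?_ hI0
  set b := Real.sqrt B with hb
  have hb0 : 0 ≤ b := Real.sqrt_nonneg _
  have hbB : B = b ^ 2 := (Real.sq_sqrt hB0).symm
  rw [hbB]
  have h5 : 1 + b * t ≤ (1 + b) * (1 + t) := by nlinarith
  calc 1 + b ^ 2 * t ^ 2 ≤ (1 + b * t) ^ 2 := by nlinarith [mul_nonneg hb0 ht0.le]
    _ ≤ _ := by gcongr
end
end

section
/- For every T > 0, every N > 0 and every m > 0, there exists u₀ ∈ L²(ℝ^d) with ‖u₀‖ ≤ 1 such that the heat solution u with initial datum u₀ satisfies ‖ u(T,·) − Σ_{n∈ℤ^d, |n|≤m} u(T, n/N) f_{N,n} ‖ ≥ (1/2)(T+1)^{-d/4}. In particular, the asymptotic observability identity fails if the sum is restricted to finitely many lattice points. -/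
open MeasureTheory Filter Topology Metric ENNReal NNReal

noncomputable section

theorem gauss_shift (d : ℕ) (b : ℝ) (hb : 0 < b) (z : EuclideanSpace ℝ (Fin d)) :
    ∫ y : EuclideanSpace ℝ (Fin d), Real.exp (-b * ‖y - z‖ ^ 2) = (Real.pi / b) ^ ((d : ℝ) / 2) := by
  rw [integral_sub_right_eq_self (fun y : EuclideanSpace ℝ (Fin d) => Real.exp (-b * ‖y‖ ^ 2)) z]
  rw [GaussianFourier.integral_rexp_neg_mul_sq_norm hb]
  simp

theorem gauss_shift_int (d : ℕ) (b : ℝ) (hb : 0 < b) (z : EuclideanSpace ℝ (Fin d)) :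
    Integrable (fun y : EuclideanSpace ℝ (Fin d) => Real.exp (-b * ‖y - z‖ ^ 2)) volume := by
  by_contra h
  have h1 := gauss_shift d b hb z
  rw [integral_undef h] at h1
  have : 0 < (Real.pi / b) ^ ((d : ℝ) / 2) := Real.rpow_pos_of_pos (div_pos Real.pi_pos hb) _
  linarith

theorem sq_complete {d : ℕ} (T : ℝ) (hT : 0 < T) (x y z : EuclideanSpace ℝ (Fin d)) :
    -‖x - y‖ ^ 2 / (4 * T) + -(1 / 4) * ‖y - z‖ ^ 2 =
      -(1 / (4 * (1 + T))) * ‖x - z‖ ^ 2 +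
      -((1 + T) / (4 * T)) * ‖y - (1 / (1 + T)) • (x + T • z)‖ ^ 2 := by
  have h1 : 1 + T ≠ 0 := by positivity
  simp only [EuclideanSpace.norm_sq_eq, Real.norm_eq_abs, sq_abs, neg_div, neg_mul,
    Finset.mul_sum, Finset.sum_div, ← Finset.sum_neg_distrib, ← Finset.sum_add_distrib]
  refine Finset.sum_congr rfl fun i _ => ?_
  simp only [PiLp.sub_apply, PiLp.smul_apply, PiLp.add_apply, smul_eq_mul]
  field_simp
  ring

theorem heat_gauss (d : ℕ) (c T : ℝ) (hT : 0 < T) (z x : EuclideanSpace ℝ (Fin d)) :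
    heatSol d (fun y => c * Real.exp (-(1 / 4) * ‖y - z‖ ^ 2)) T x =
      c * (1 + T) ^ (-(d : ℝ) / 2) * Real.exp (-(1 / (4 * (1 + T))) * ‖x - z‖ ^ 2) := by
  unfold heatSol
  have h : ∀ y : EuclideanSpace ℝ (Fin d),
      Real.exp (-‖x - y‖ ^ 2 / (4 * T)) * (c * Real.exp (-(1 / 4) * ‖y - z‖ ^ 2)) =
      (c * Real.exp (-(1 / (4 * (1 + T))) * ‖x - z‖ ^ 2)) *
        Real.exp (-((1 + T) / (4 * T)) * ‖y - (1 / (1 + T)) • (x + T • z)‖ ^ 2) := by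
    intro y
    rw [mul_left_comm, ← Real.exp_add, sq_complete T hT, Real.exp_add]
    ring
  simp_rw [h]
  rw [integral_const_mul, gauss_shift d _ (by positivity)]
  have h2 : (4 * Real.pi * T) ^ (-(d : ℝ) / 2) * (Real.pi / ((1 + T) / (4 * T))) ^ ((d : ℝ) / 2)
      = (1 + T) ^ (-(d : ℝ) / 2) := by
    have : Real.pi / ((1 + T) / (4 * T)) = (4 * Real.pi * T) * (1 + T)⁻¹ := by
      field_simp
    rw [this, Real.mul_rpow (x := 4 * Real.pi * T) (y := (1 + T)⁻¹) (by positivity) (by positivity), ← mul_assoc,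
      ← Real.rpow_add (by positivity), Real.inv_rpow (by positivity), neg_div,
      Real.rpow_neg (by positivity) ((d : ℝ) / 2)]
    simp
  rw [← h2]
  ring

theorem sinc'_abs_le (x : ℝ) : |sinc' x| ≤ 1 := by
  have : sinc' x = Real.sinc x := rfl
  rw [this]
  exact Real.abs_sinc_le_one x

theorem fN_abs_le (d : ℕ) (N : ℝ) (n : Fin d → ℤ) (x : EuclideanSpace ℝ (Fin d)) :
    |fN d N n x| ≤ 1 := by
  unfold fN
  rw [Finset.abs_prod]
  exact Finset.prod_le_one (fun _ _ => abs_nonneg _) (fun _ _ => sinc'_abs_le _)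

theorem eLp_two_lower (d : ℕ) (w ψ : EuclideanSpace ℝ (Fin d) → ℝ) (a : ℝ) (ha : 0 ≤ a)
    (hψ : Integrable ψ volume) (h : ∀ x, ψ x ≤ w x ^ 2) (hI : a ^ 2 ≤ ∫ x, ψ x) :
    ENNReal.ofReal a ≤ eLpNorm w 2 volume := by
  have h1 : ENNReal.ofReal (∫ x, ψ x) ≤ ∫⁻ x, ENNReal.ofReal (w x ^ 2) := by
    calc ENNReal.ofReal (∫ x, ψ x) ≤ ENNReal.ofReal (∫ x, max (ψ x) 0) :=
          ENNReal.ofReal_le_ofReal (integral_mono hψ hψ.pos_part fun x => le_max_left _ _)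
      _ = ∫⁻ x, ENNReal.ofReal (max (ψ x) 0) :=
          ofReal_integral_eq_lintegral_ofReal hψ.pos_part (ae_of_all _ fun x => le_max_right _ _)
      _ ≤ _ := lintegral_mono fun x => ENNReal.ofReal_le_ofReal (max_le (h x) (sq_nonneg _))
  rw [eLpNorm_eq_lintegral_rpow_enorm_toReal (by norm_num) (by norm_num)]
  have h2 : ∀ x, ‖w x‖ₑ ^ (2 : ℝ≥0∞).toReal = ENNReal.ofReal (w x ^ 2) := by
    intro x
    rw [← sq_abs, ENNReal.ofReal_pow (abs_nonneg _), ← Real.enorm_eq_ofReal_abs]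
    simp
  simp_rw [h2]
  have h3 : ENNReal.ofReal a = (ENNReal.ofReal (a ^ 2)) ^ (1 / (2 : ℝ≥0∞).toReal) := by
    rw [ENNReal.ofReal_pow ha, ← ENNReal.rpow_natCast, ← ENNReal.rpow_mul]
    simp
  rw [h3]
  exact ENNReal.rpow_le_rpow ((ENNReal.ofReal_le_ofReal hI).trans h1) (by simp)

theorem exp_sq (b r : ℝ) (c : ℝ) : (c * Real.exp (-b * r)) ^ 2 = c ^ 2 * Real.exp (-(2 * b) * r) := by
  rw [mul_pow, ← Real.exp_nat_mul]
  congr 2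
  push_cast
  ring

theorem exists_far (d : ℕ) (hd : 0 < d) {ι : Type} (s : Finset ι)
    (p : ι → EuclideanSpace ℝ (Fin d)) (K b ε : ℝ) (hb : 0 < b) (hε : 0 < ε) :
    ∃ z : EuclideanSpace ℝ (Fin d), ∑ n ∈ s, K * Real.exp (-b * ‖p n - z‖ ^ 2) < ε := by
  haveI : Nonempty (Fin d) := ⟨⟨0, hd⟩⟩
  have h : Tendsto (fun z : EuclideanSpace ℝ (Fin d) =>
      ∑ n ∈ s, K * Real.exp (-b * ‖p n - z‖ ^ 2)) (cocompact _) (𝓝 (∑ n ∈ s, K * 0)) := by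
    refine tendsto_finset_sum _ fun n _ => Tendsto.const_mul _ ?_
    refine Real.tendsto_exp_atBot.comp ?_
    refine Tendsto.const_mul_atTop_of_neg (by linarith) ?_
    refine (tendsto_pow_atTop two_ne_zero).comp ?_
    exact (tendsto_norm_cocompact_atTop (E := EuclideanSpace ℝ (Fin d))).comp
      (Homeomorph.subLeft (p n)).isClosedEmbedding.tendsto_cocompact
  simp only [mul_zero, Finset.sum_const_zero] at h
  haveI : NeBot (cocompact (EuclideanSpace ℝ (Fin d))) := by
    haveI : NoncompactSpace (EuclideanSpace ℝ (Fin d)) :=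
      NormedSpace.noncompactSpace ℝ _
    infer_instance
  exact (h.eventually (gt_mem_nhds hε)).exists

/-- The asymptotic observability identity fails with finitely many lattice points:
for every `T > 0`, `N > 0` and `m > 0` (where `s` is the finite set of `n ∈ ℤ^d` with
`|n| ≤ m`), there is `u₀ ∈ L²(ℝ^d)` with `‖u₀‖ ≤ 1` such that
`‖u(T,·) - Σ_{|n| ≤ m} u(T,n/N) f_{N,n}‖ ≥ (1/2)(T+1)^{-d/4}`. -/
theorem statement13 (d : ℕ) (hd : 0 < d) (T N m : ℝ) (hT : 0 < T) (hN : 0 < N) (hm : 0 < m)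
    (s : Finset (Fin d → ℤ))
    (hs : ∀ n : Fin d → ℤ, n ∈ s ↔ Real.sqrt (∑ j, ((n j : ℝ)) ^ 2) ≤ m) :
    ∃ u₀ : EuclideanSpace ℝ (Fin d) → ℝ, MemLp u₀ 2 volume ∧ l2norm d u₀ ≤ 1 ∧
      ENNReal.ofReal ((1 / 2) * (T + 1) ^ (-(d : ℝ) / 4)) ≤
        eLpNorm (fun x => heatSol d u₀ T x -
          ∑ n ∈ s, heatSol d u₀ T (latticePt d N n) * fN d N n x) 2 volume := by
  classical
  set c : ℝ := (2 * Real.pi) ^ (-(d : ℝ) / 4) with hc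
  have hcpos : 0 < c := Real.rpow_pos_of_pos (by positivity) _
  have hT1 : 0 < 1 + T := by positivity
  have hc2 : c ^ 2 = (2 * Real.pi) ^ (-(d : ℝ) / 2) := by
    rw [hc, ← Real.rpow_natCast, ← Real.rpow_mul (by positivity)]
    congr 1
    push_cast
    ring
  set K : ℝ := c * (1 + T) ^ (-(d : ℝ) / 2) with hK
  have hKpos : 0 < K := mul_pos hcpos (Real.rpow_pos_of_pos hT1 _)
  set b : ℝ := 1 / (4 * (1 + T)) with hb
  have hbpos : 0 < b := by positivity
  set B : ℝ := (Real.pi / b) ^ ((d : ℝ) / 2) with hB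
  have hBpos : 0 < B := Real.rpow_pos_of_pos (by positivity) _
  set A : ℝ := (1 + T) ^ (-(d : ℝ) / 2) with hA
  have hApos : 0 < A := Real.rpow_pos_of_pos hT1 _
  have hA1 : K ^ 2 * (Real.pi / (2 * b)) ^ ((d : ℝ) / 2) = A := by
    have e : Real.pi / (2 * b) = (2 * Real.pi) * (1 + T) := by
      rw [hb]; field_simp; ring
    rw [e, Real.mul_rpow (by positivity) hT1.le, hK, mul_pow, hc2]
    have e1 : (2 * Real.pi) ^ (-(d : ℝ) / 2) * (2 * Real.pi) ^ ((d : ℝ) / 2) = 1 := by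
      rw [← Real.rpow_add (by positivity)]; ring_nf; simp
    have e2 : A * (1 + T) ^ ((d : ℝ) / 2) = 1 := by
      rw [hA, ← Real.rpow_add (by positivity)]; ring_nf; simp
    calc _ = ((2 * Real.pi) ^ (-(d : ℝ) / 2) * (2 * Real.pi) ^ ((d : ℝ) / 2)) *
          (A * (A * (1 + T) ^ ((d : ℝ) / 2))) := by ring
      _ = A := by rw [e1, e2]; ring
  set ε : ℝ := 3 * A / (8 * K * B) with hε
  have hεpos : 0 < ε := by positivity
  obtain ⟨z, hz⟩ := exists_far d hd s (latticePt d N) K b ε hbpos hεpos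
  refine ⟨fun y => c * Real.exp (-(1 / 4) * ‖y - z‖ ^ 2), ?_, ?_, ?_⟩
  · rw [memLp_two_iff_integrable_sq (by fun_prop)]
    simp_rw [exp_sq]
    exact (gauss_shift_int d _ (by norm_num) z).const_mul _
  · unfold l2norm
    have hm : MemLp (fun y : EuclideanSpace ℝ (Fin d) =>
        c * Real.exp (-(1 / 4) * ‖y - z‖ ^ 2)) 2 volume := by
      rw [memLp_two_iff_integrable_sq (by fun_prop)]
      simp_rw [exp_sq]
      exact (gauss_shift_int d _ (by norm_num) z).const_mul _
    rw [hm.eLpNorm_eq_integral_rpow_norm (by norm_num) (by norm_num),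
      ENNReal.toReal_ofReal (by positivity)]
    have e : ∀ y : EuclideanSpace ℝ (Fin d),
        ‖c * Real.exp (-(1 / 4) * ‖y - z‖ ^ 2)‖ ^ (2 : ℝ≥0∞).toReal =
        c ^ 2 * Real.exp (-(2 * (1 / 4)) * ‖y - z‖ ^ 2) := by
      intro y
      rw [← exp_sq, Real.norm_eq_abs, ENNReal.toReal_ofNat, Real.rpow_two, sq_abs]
    simp_rw [e]
    rw [integral_const_mul, gauss_shift d _ (by norm_num)]
    have e3 : Real.pi / (2 * (1 / 4)) = 2 * Real.pi := by ring
    rw [e3, hc2, ← Real.rpow_add (by positivity)]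
    ring_nf
    simp
  · simp_rw [heat_gauss d c T hT z]
    rw [← hb, ← hK]
    have hi1 := (gauss_shift_int d (2 * b) (by positivity) z).const_mul (K ^ 2)
    have hi2 := (gauss_shift_int d b hbpos z).const_mul (2 * ε * K)
    refine eLp_two_lower d _ (fun x => K ^ 2 * Real.exp (-(2 * b) * ‖x - z‖ ^ 2) -
      2 * ε * K * Real.exp (-b * ‖x - z‖ ^ 2)) _ (by positivity) (hi1.sub hi2) ?_ ?_
    · intro x
      rw [← exp_sq]
      set S := ∑ n ∈ s, K * Real.exp (-b * ‖latticePt d N n - z‖ ^ 2) * fN d N n x with hS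
      have hSle : S ≤ ε := by
        refine le_trans (Finset.sum_le_sum fun n _ => ?_) hz.le
        exact mul_le_of_le_one_right (by positivity) ((le_abs_self _).trans (fN_abs_le d N n x))
      have hg : 0 ≤ K * Real.exp (-b * ‖x - z‖ ^ 2) := by positivity
      nlinarith [mul_le_mul_of_nonneg_left hSle hg, sq_nonneg S]
    · rw [integral_sub hi1 hi2, integral_const_mul, integral_const_mul,
        gauss_shift d _ hbpos, gauss_shift d _ (by positivity), hA1, ← hB]
      have e4 : 2 * ε * K * B = 3 / 4 * A := by
        rw [hε]; field_simp; ring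
      rw [e4, mul_pow, add_comm T 1, ← Real.rpow_natCast (_ ^ _), ← Real.rpow_mul hT1.le]
      have e5 : -(d : ℝ) / 4 * ((2 : ℕ) : ℝ) = -(d : ℝ) / 2 := by push_cast; ring
      rw [e5, ← hA]
      linarith
end
end
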